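/- For every a ∈ ℝ there exists a bounded linear operator Q : L²(ℝⁿ, e^{-|x|²}) → L²(ℝⁿ, e^{-|x|²}) such that for every f, Q f is a weak solution of Δ(Qf) + a(Qf) = f, and the operator norm satisfies ‖Q‖ ≤ 1/√(8n). -/

import Mathlib

open MeasureTheory Real

noncomputable def lap {n : ℕ} (f : EuclideanSpace ℝ (Fin n) → ℝ)
    (x : EuclideanSpace ℝ (Fin n)) : ℝ :=
  ∑ i : Fin n, fderiv ℝ (fun y => fderiv ℝ f y (EuclideanSpace.single i 1)) x
    (EuclideanSpace.single i 1)

/-- The Gaussian-weighted measure `e^{-|x|²} dx` on `ℝⁿ`. -/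
noncomputable def gaussMeasure (n : ℕ) : Measure (EuclideanSpace ℝ (Fin n)) :=
  volume.withDensity fun x => ENNReal.ofReal (Real.exp (-‖x‖ ^ 2))

/-!
Send a test function `ψ` to `e^φ ψ` in `L²(e^{-φ} dμ)`, where `φ = |x|²` for the Gaussian weight.
In the inner product pulled back along this embedding, `Bᵢ = -∂ᵢ` has formal adjoint
`Aᵢ = ∂ᵢ + ∂ᵢφ`, and since the Hessian of `φ` is `c` times the identity these satisfy the canonical
commutation relations `[Aᵢ, Bₖ] = c δᵢₖ`. Expanding the commutator of `∑ Aᵢ² + a` with its adjoint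
`∑ Bᵢ² + a = Δ + a` gives
`‖(Δ + a)ψ‖² = ‖(∑ Aᵢ² + a)ψ‖² + 4c ∑ ‖Aᵢψ‖² + 2c²n ‖ψ‖² ≥ 2c²n ‖ψ‖²`.
Hence `(Δ + a)ψ ↦ ψ` extends to an operator of norm at most `1 / √(2c²n)`. Its adjoint is `Q`,
because the embedding turns the inner product of `L²(e^{-φ} dμ)` into the unweighted pairing in
the definition of a weak solution.
-/

open scoped ComplexConjugate InnerProductSpace ContDiff Distributions
open TopologicalSpace (Opens)

theorem exists_clm_inner_apply_eq_of_norm_le {𝕜 V H G : Type*} [RCLike 𝕜]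
    [AddCommGroup V] [Module 𝕜 V]
    [NormedAddCommGroup H] [InnerProductSpace 𝕜 H] [CompleteSpace H]
    [NormedAddCommGroup G] [InnerProductSpace 𝕜 G] [CompleteSpace G]
    (j : V →ₗ[𝕜] G) (T : V →ₗ[𝕜] H) {C : ℝ} (hC : 0 ≤ C) (hjT : ∀ v, ‖j v‖ ≤ C * ‖T v‖) :
    ∃ Q : G →L[𝕜] H, (∀ f v, ⟪Q f, T v⟫_𝕜 = ⟪f, j v⟫_𝕜) ∧ ‖Q‖ ≤ C := by
  let K : Submodule 𝕜 H := T.range.topologicalClosure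
  let e : V →ₗ[𝕜] K :=
    T.codRestrict K fun v ↦ T.range.le_topologicalClosure (T.mem_range_self v)
  have : CompleteSpace K := T.range.isClosed_topologicalClosure.completeSpace_coe
  have he : DenseRange e := by
    intro y
    rw [closure_subtype, ← Set.range_comp]
    exact y.2
  let S : H →L[𝕜] G := (j.extendOfNorm e).comp K.orthogonalProjectionOnto
  have hST (v : V) : S (T v) = j v := by
    have hproj : K.orthogonalProjectionOnto (T v) = e v :=
      K.orthogonalProjectionOnto_mem_subspace_eq_self (e v)
    simp only [S, ContinuousLinearMap.comp_apply, hproj]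
    exact LinearMap.extendOfNorm_eq he ⟨C, hjT⟩ v
  have hS : ‖S‖ ≤ C :=
    calc ‖S‖ ≤ ‖j.extendOfNorm e‖ * ‖K.orthogonalProjectionOnto‖ :=
          ContinuousLinearMap.opNorm_comp_le _ _
      _ ≤ C * 1 := by
          gcongr
          · exact LinearMap.opNorm_extendOfNorm_le he hC hjT
          · exact K.orthogonalProjectionOnto_norm_le
      _ = C := mul_one C
  refine ⟨ContinuousLinearMap.adjoint S, fun f v ↦ ?_, ?_⟩
  · rw [ContinuousLinearMap.adjoint_inner_left, hST]
  · rwa [LinearIsometryEquiv.norm_map]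

section Lie

variable {K R ι : Type*} [CommRing K] [Ring R] [Algebra K R] {c : K}

theorem lie_sq_sq_of_lie_eq_algebraMap {a b : R} (h : ⁅a, b⁆ = algebraMap K R c) :
    ⁅a ^ 2, b ^ 2⁆ = (4 * c) • (b * a) + algebraMap K R (2 * c ^ 2) := by
  have hb : ⁅a, b ^ 2⁆ = (2 * c) • b :=
    calc ⁅a, b ^ 2⁆ = ⁅a, b⁆ * b + b * ⁅a, b⁆ := by simp only [Ring.lie_def]; noncomm_ring
      _ = (2 * c) • b := by
        rw [h, ← Algebra.commutes, ← Algebra.smul_def, ← add_smul, two_mul]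
  calc ⁅a ^ 2, b ^ 2⁆ = a * ⁅a, b ^ 2⁆ + ⁅a, b ^ 2⁆ * a := by
        simp only [Ring.lie_def]; noncomm_ring
    _ = (4 * c) • (b * a) + (2 * c) • ⁅a, b⁆ := by
        rw [hb, Ring.lie_def, mul_smul_comm, smul_mul_assoc]; module
    _ = (4 * c) • (b * a) + algebraMap K R (2 * c ^ 2) := by
        rw [h, Algebra.smul_def (2 * c), ← map_mul]; ring_nf

theorem lie_sum_sq_sum_sq [Fintype ι] [DecidableEq ι] {a b : ι → R}
    (h : ∀ i k, ⁅a i, b k⁆ = algebraMap K R (if i = k then c else 0)) :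
    ⁅∑ i, a i ^ 2, ∑ i, b i ^ 2⁆ =
      (4 * c) • ∑ i, b i * a i + algebraMap K R (2 * c ^ 2 * Fintype.card ι) := by
  have hik (i k : ι) : ⁅a i ^ 2, b k ^ 2⁆ =
      if i = k then (4 * c) • (b i * a i) + algebraMap K R (2 * c ^ 2) else 0 := by
    rw [lie_sq_sq_of_lie_eq_algebraMap (h i k)]
    split_ifs with hik
    · rw [hik]
    · simp
  calc
    ⁅∑ i, a i ^ 2, ∑ i, b i ^ 2⁆ = ∑ i, ∑ k, ⁅a i ^ 2, b k ^ 2⁆ := by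
      simp only [Ring.lie_def, Finset.sum_mul_sum, Finset.sum_sub_distrib]
      rw [Finset.sum_comm (f := fun i k ↦ b i ^ 2 * a k ^ 2)]
    _ = ∑ i, ((4 * c) • (b i * a i) + algebraMap K R (2 * c ^ 2)) := by
      simp only [hik, Finset.sum_ite_eq, Finset.mem_univ, if_true]
    _ = _ := by
      rw [Finset.sum_add_distrib, ← Finset.smul_sum, Finset.sum_const, Finset.card_univ,
        ← map_nsmul, nsmul_eq_mul, mul_comm (Fintype.card ι : K)]

theorem lie_add_algebraMap_add_algebraMap (a b : R) (z w : K) :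
    ⁅a + algebraMap K R z, b + algebraMap K R w⁆ = ⁅a, b⁆ := by
  rw [Ring.lie_def, Ring.lie_def]
  simp only [mul_add, add_mul]
  rw [Algebra.commutes z b, ← Algebra.commutes w a, Algebra.commutes z (algebraMap K R w)]
  abel

end Lie

section FormalAdjoint

variable {𝕜 V H ι : Type*} [RCLike 𝕜] [AddCommGroup V] [Module 𝕜 V]
  [SeminormedAddCommGroup H] [InnerProductSpace 𝕜 H] {j : V →ₗ[𝕜] H}
  {S T S' T' : Module.End 𝕜 V}

/-- The operators `S` and `T` on `V` are formally adjoint for the (possibly degenerate) inner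
product that `V` inherits from `H` through `j`. This models unbounded operators on `H` that map a
common domain `V` to itself. -/
def IsFormalAdjoint (j : V →ₗ[𝕜] H) (S T : Module.End 𝕜 V) : Prop :=
  ∀ u v, ⟪j (S u), j v⟫_𝕜 = ⟪j u, j (T v)⟫_𝕜

namespace IsFormalAdjoint

protected theorem symm (h : IsFormalAdjoint j S T) : IsFormalAdjoint j T S := fun u v ↦ by
  rw [← inner_conj_symm, ← h v u, inner_conj_symm]

protected theorem add (h : IsFormalAdjoint j S T) (h' : IsFormalAdjoint j S' T') :
    IsFormalAdjoint j (S + S') (T + T') := fun u v ↦ by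
  simp only [LinearMap.add_apply, map_add, inner_add_left, inner_add_right, h u v, h' u v]

protected theorem sum {s : Finset ι} {S T : ι → Module.End 𝕜 V}
    (h : ∀ i ∈ s, IsFormalAdjoint j (S i) (T i)) :
    IsFormalAdjoint j (∑ i ∈ s, S i) (∑ i ∈ s, T i) := fun u v ↦ by
  simp only [LinearMap.sum_apply, map_sum, sum_inner, inner_sum]
  exact Finset.sum_congr rfl fun i hi ↦ h i hi u v

protected theorem sq (h : IsFormalAdjoint j S T) : IsFormalAdjoint j (S ^ 2) (T ^ 2) := fun u v ↦ by
  simp only [sq, Module.End.mul_apply, h _ _]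

protected theorem algebraMap (z : 𝕜) :
    IsFormalAdjoint j (algebraMap 𝕜 _ (conj z)) (algebraMap 𝕜 _ z) := fun u v ↦ by
  simp only [Module.algebraMap_end_apply, map_smul, inner_smul_left, inner_smul_right,
    RCLike.conj_conj]

theorem norm_sq_eq_add_re_inner_lie (h : IsFormalAdjoint j S T) (u : V) :
    ‖j (T u)‖ ^ 2 = ‖j (S u)‖ ^ 2 + RCLike.re ⟪j u, j (⁅S, T⁆ u)⟫_𝕜 := by
  rw [← inner_self_eq_norm_sq (𝕜 := 𝕜) (j (T u)), ← inner_self_eq_norm_sq (𝕜 := 𝕜) (j (S u)),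
    h.symm, h, Ring.lie_def, LinearMap.sub_apply, map_sub, inner_sub_right, map_sub]
  simp only [Module.End.mul_apply]
  ring

end IsFormalAdjoint

variable [Fintype ι] [DecidableEq ι] {A B : ι → Module.End 𝕜 V} {c : ℝ}

theorem norm_sq_sum_sq_add_algebraMap (hadj : ∀ i, IsFormalAdjoint j (A i) (B i))
    (hcomm : ∀ i k, ⁅A i, B k⁆ = algebraMap 𝕜 _ (if i = k then (c : 𝕜) else 0))
    (z : 𝕜) (u : V) :
    ‖j ((∑ i, B i ^ 2 + algebraMap 𝕜 _ z) u)‖ ^ 2 =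
      ‖j ((∑ i, A i ^ 2 + algebraMap 𝕜 _ (conj z)) u)‖ ^ 2 + 4 * c * ∑ i, ‖j (A i u)‖ ^ 2 +
        2 * c ^ 2 * Fintype.card ι * ‖j u‖ ^ 2 := by
  have hST : IsFormalAdjoint j (∑ i, A i ^ 2 + algebraMap 𝕜 _ (conj z))
      (∑ i, B i ^ 2 + algebraMap 𝕜 _ z) :=
    (IsFormalAdjoint.sum fun i _ ↦ (hadj i).sq).add (.algebraMap z)
  have hlie : ⁅∑ i, A i ^ 2 + algebraMap 𝕜 (Module.End 𝕜 V) (conj z),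
      ∑ i, B i ^ 2 + algebraMap 𝕜 (Module.End 𝕜 V) z⁆ =
      (4 * c : 𝕜) • ∑ i, B i * A i + algebraMap 𝕜 _ (2 * (c : 𝕜) ^ 2 * Fintype.card ι) := by
    rw [lie_add_algebraMap_add_algebraMap, lie_sum_sq_sum_sq hcomm]
  have hnorm (i : ι) : ⟪j u, j (B i (A i u))⟫_𝕜 = (‖j (A i u)‖ ^ 2 : ℝ) := by
    rw [← hadj i, inner_self_eq_norm_sq_to_K, RCLike.ofReal_pow]
  rw [hST.norm_sq_eq_add_re_inner_lie, hlie]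
  simp only [LinearMap.add_apply, LinearMap.smul_apply, LinearMap.sum_apply, Module.End.mul_apply,
    Module.algebraMap_end_apply, map_add, map_smul, map_sum, inner_add_right, inner_smul_right,
    inner_sum, hnorm, inner_self_eq_norm_sq_to_K]
  norm_cast
  ring

theorem norm_le_mul_norm_sum_sq_add_algebraMap [Nonempty ι] (hc : 0 < c)
    (hadj : ∀ i, IsFormalAdjoint j (A i) (B i))
    (hcomm : ∀ i k, ⁅A i, B k⁆ = algebraMap 𝕜 _ (if i = k then (c : 𝕜) else 0))
    (z : 𝕜) (u : V) :
    ‖j u‖ ≤ 1 / √(2 * c ^ 2 * Fintype.card ι) * ‖j ((∑ i, B i ^ 2 + algebraMap 𝕜 _ z) u)‖ := by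
  have hN : (0 : ℝ) < 2 * c ^ 2 * Fintype.card ι := by positivity
  have hsq : 2 * c ^ 2 * Fintype.card ι * ‖j u‖ ^ 2 ≤
      ‖j ((∑ i, B i ^ 2 + algebraMap 𝕜 _ z) u)‖ ^ 2 := by
    rw [norm_sq_sum_sq_add_algebraMap hadj hcomm]
    exact le_add_of_nonneg_left (by positivity)
  rw [one_div, inv_mul_eq_div, le_div_iff₀' (Real.sqrt_pos.mpr hN)]
  refine le_of_sq_le_sq ?_ (norm_nonneg _)
  rwa [mul_pow, Real.sq_sqrt hN.le]

end FormalAdjoint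

section TestFunction

variable {E : Type*} [NormedAddCommGroup E] [NormedSpace ℝ E] {Ω : Opens E}

/-- The derivative in direction `v`, as an operator on the test functions on `Ω`. -/
noncomputable def derivEnd (Ω : Opens E) (v : E) : Module.End ℝ 𝓓(Ω, ℝ) :=
  (TestFunction.lineDerivCLM ℝ v).toLinearMap

/-- Multiplication by a smooth function `g`, as an operator on the test functions on `Ω`. -/
noncomputable def mulEnd (Ω : Opens E) (g : E → ℝ) (hg : ContDiff ℝ ∞ g) :
    Module.End ℝ 𝓓(Ω, ℝ) where
  toFun ψ := ⟨fun x ↦ g x * ψ x, hg.mul ψ.contDiff, ψ.hasCompactSupport.mul_left,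
    (tsupport_mul_subset_right (f := g)).trans ψ.tsupport_subset⟩
  map_add' ψ χ := by ext x; exact mul_add (g x) (ψ x) (χ x)
  map_smul' r ψ := by ext x; exact mul_left_comm (g x) r (ψ x)

theorem derivEnd_apply (v : E) (ψ : 𝓓(Ω, ℝ)) (x : E) :
    derivEnd Ω v ψ x = fderiv ℝ ψ x v := by
  rw [derivEnd, ContinuousLinearMap.coe_coe, TestFunction.lineDerivCLM_eq_fderivCLM,
    TestFunction.fderivCLM_apply_of_le ψ le_rfl]

theorem mulEnd_apply {g : E → ℝ} (hg : ContDiff ℝ ∞ g) (ψ : 𝓓(Ω, ℝ)) (x : E) :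
    mulEnd Ω g hg ψ x = g x * ψ x := rfl

theorem mulEnd_const (c : ℝ) : mulEnd Ω (fun _ ↦ c) contDiff_const = algebraMap ℝ _ c := rfl

theorem derivEnd_derivEnd_apply (v w : E) (ψ : 𝓓(Ω, ℝ)) (x : E) :
    derivEnd Ω v (derivEnd Ω w ψ) x = fderiv ℝ (fun y ↦ fderiv ℝ ψ y w) x v := by
  rw [derivEnd_apply, funext (derivEnd_apply w ψ)]

theorem derivEnd_mulEnd_apply (v : E) {g : E → ℝ} (hg : ContDiff ℝ ∞ g) (ψ : 𝓓(Ω, ℝ)) (x : E) :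
    derivEnd Ω v (mulEnd Ω g hg ψ) x = fderiv ℝ g x v * ψ x + g x * derivEnd Ω v ψ x := by
  rw [derivEnd_apply, derivEnd_apply, funext (mulEnd_apply hg ψ),
    fderiv_fun_mul (hg.differentiable (by simp) x) (ψ.contDiff.differentiable (by simp) x)]
  simp only [add_apply, smul_apply, smul_eq_mul]
  ring

theorem contDiff_fderiv_apply_const {g : E → ℝ} (hg : ContDiff ℝ ∞ g) (v : E) :
    ContDiff ℝ ∞ fun x ↦ fderiv ℝ g x v :=
  (hg.fderiv_right (m := ∞) (by simp)).clm_apply contDiff_const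

theorem lie_derivEnd_derivEnd (v w : E) : ⁅derivEnd Ω v, derivEnd Ω w⁆ = 0 := by
  ext ψ x
  have hsymm : IsSymmSndFDerivAt ℝ ψ x :=
    ψ.contDiff.contDiffAt.isSymmSndFDerivAt (by simpa using ENat.LEInfty.out)
  have hψ : DifferentiableAt ℝ (fderiv ℝ ψ) x :=
    (ψ.contDiff.fderiv_right (m := ∞) (by simp)).differentiable (by simp) x
  have hsnd (v w : E) : derivEnd Ω v (derivEnd Ω w ψ) x = fderiv ℝ (fderiv ℝ ψ) x v w := by
    simp [derivEnd_derivEnd_apply, fderiv_clm_apply hψ (differentiableAt_const w)]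
  simp [Ring.lie_def, hsnd, hsymm.eq v w]

theorem lie_derivEnd_mulEnd (v : E) {g : E → ℝ} (hg : ContDiff ℝ ∞ g) :
    ⁅derivEnd Ω v, mulEnd Ω g hg⁆ =
      mulEnd Ω (fun x ↦ fderiv ℝ g x v) (contDiff_fderiv_apply_const hg v) := by
  ext ψ x
  simp [Ring.lie_def, derivEnd_mulEnd_apply, mulEnd_apply]

theorem lie_derivEnd_add_mulEnd_neg_derivEnd (v w : E) {g : E → ℝ} (hg : ContDiff ℝ ∞ g) :
    ⁅derivEnd Ω v + mulEnd Ω g hg, -derivEnd Ω w⁆ =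
      mulEnd Ω (fun x ↦ fderiv ℝ g x w) (contDiff_fderiv_apply_const hg w) :=
  calc
    ⁅derivEnd Ω v + mulEnd Ω g hg, -derivEnd Ω w⁆ =
        ⁅derivEnd Ω w, mulEnd Ω g hg⁆ - ⁅derivEnd Ω v, derivEnd Ω w⁆ := by
      simp only [Ring.lie_def]
      noncomm_ring
    _ = _ := by rw [lie_derivEnd_mulEnd, lie_derivEnd_derivEnd, sub_zero]

theorem sum_sq_neg_derivEnd_add_algebraMap_apply {ι : Type*} [Fintype ι] (v : ι → E) (a : ℝ)
    (ψ : 𝓓(Ω, ℝ)) (x : E) :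
    (∑ i, (-derivEnd Ω (v i)) ^ 2 + algebraMap ℝ (Module.End ℝ 𝓓(Ω, ℝ)) a) ψ x =
      ∑ i, fderiv ℝ (fun y ↦ fderiv ℝ ψ y (v i)) x (v i) + a * ψ x := by
  simp [sq, derivEnd_derivEnd_apply]

end TestFunction

section ExpWeighted

variable {X : Type*} [MeasurableSpace X] {μ : Measure X} {φ : X → ℝ}

/-- The measure `e^{-φ} dμ`. -/
noncomputable def expWeighted (μ : Measure X) (φ : X → ℝ) : Measure X :=
  μ.withDensity fun x ↦ ENNReal.ofReal (exp (-φ x))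

theorem absolutelyContinuous_expWeighted (hφ : Measurable φ) : μ ≪ expWeighted μ φ :=
  withDensity_absolutelyContinuous' (by fun_prop) (.of_forall fun x ↦ by simp [exp_pos])

theorem integral_expWeighted (hφ : Measurable φ) (g : X → ℝ) :
    ∫ x, g x ∂expWeighted μ φ = ∫ x, exp (-φ x) * g x ∂μ := by
  rw [expWeighted, integral_withDensity_eq_integral_toReal_smul (by fun_prop) (by simp)]
  simp only [ENNReal.toReal_ofReal (exp_pos _).le, smul_eq_mul]

theorem isLocallyFiniteMeasure_expWeighted [TopologicalSpace X] [OpensMeasurableSpace X]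
    [IsLocallyFiniteMeasure μ] (hφ : Continuous φ) : IsLocallyFiniteMeasure (expWeighted μ φ) :=
  IsLocallyFiniteMeasure.withDensity_ofReal (by fun_prop)

end ExpWeighted

section ExpEmbedding

variable {E : Type*} [NormedAddCommGroup E] [NormedSpace ℝ E] [MeasurableSpace E] [BorelSpace E]
  {Ω : Opens E} {μ : Measure E} {φ : E → ℝ}

/-- The inclusion of the test functions on `Ω` into `L²(ν)`. -/
noncomputable def testToL2 (Ω : Opens E) (ν : Measure E) [IsFiniteMeasureOnCompacts ν] :
    𝓓(Ω, ℝ) →ₗ[ℝ] Lp ℝ 2 ν where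
  toFun ψ := (ψ.continuous.memLp_of_hasCompactSupport ψ.hasCompactSupport).toLp ψ
  map_add' ψ χ := by rw [← MemLp.toLp_add]; rfl
  map_smul' r ψ := by rw [RingHom.id_apply, ← MemLp.toLp_const_smul]; rfl

theorem coeFn_testToL2 (ν : Measure E) [IsFiniteMeasureOnCompacts ν] (ψ : 𝓓(Ω, ℝ)) :
    testToL2 Ω ν ψ =ᵐ[ν] ψ :=
  (ψ.continuous.memLp_of_hasCompactSupport ψ.hasCompactSupport).coeFn_toLp

/-- The embedding `ψ ↦ e^φ ψ` of the test functions on `Ω` into `L²(e^{-φ} dμ)`. The factor `e^φ`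
turns the inner product of that space into the unweighted pairing; see `inner_expEmbedding`. -/
noncomputable def expEmbedding (Ω : Opens E) (μ : Measure E) [IsLocallyFiniteMeasure μ]
    (hφ : ContDiff ℝ ∞ φ) : 𝓓(Ω, ℝ) →ₗ[ℝ] Lp ℝ 2 (expWeighted μ φ) :=
  haveI := isLocallyFiniteMeasure_expWeighted (μ := μ) hφ.continuous
  testToL2 Ω (expWeighted μ φ) ∘ₗ mulEnd Ω (fun x ↦ exp (φ x)) hφ.exp

theorem coeFn_expEmbedding [IsLocallyFiniteMeasure μ] (hφ : ContDiff ℝ ∞ φ) (ψ : 𝓓(Ω, ℝ)) :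
    expEmbedding Ω μ hφ ψ =ᵐ[expWeighted μ φ] fun x ↦ exp (φ x) * ψ x :=
  haveI := isLocallyFiniteMeasure_expWeighted (μ := μ) hφ.continuous
  coeFn_testToL2 (expWeighted μ φ) (mulEnd Ω (fun x ↦ exp (φ x)) hφ.exp ψ)

theorem inner_expEmbedding [IsLocallyFiniteMeasure μ] (hφ : ContDiff ℝ ∞ φ)
    (u : Lp ℝ 2 (expWeighted μ φ)) (ψ : 𝓓(Ω, ℝ)) :
    ⟪u, expEmbedding Ω μ hφ ψ⟫_ℝ = ∫ x, u x * ψ x ∂μ :=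
  calc
    ⟪u, expEmbedding Ω μ hφ ψ⟫_ℝ = ∫ x, u x * (exp (φ x) * ψ x) ∂expWeighted μ φ := by
      rw [L2.inner_def]
      refine integral_congr_ae ((coeFn_expEmbedding hφ ψ).mono fun x hx ↦ ?_)
      simp only [RCLike.inner_apply, conj_trivial, hx, mul_comm (u x)]
    _ = ∫ x, u x * ψ x ∂μ := by
      rw [integral_expWeighted hφ.continuous.measurable]
      congr with x
      rw [mul_left_comm (u x), ← mul_assoc, ← exp_add, neg_add_cancel, exp_zero, one_mul]

theorem inner_expEmbedding_expEmbedding [IsLocallyFiniteMeasure μ] (hφ : ContDiff ℝ ∞ φ)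
    (χ ψ : 𝓓(Ω, ℝ)) :
    ⟪expEmbedding Ω μ hφ χ, expEmbedding Ω μ hφ ψ⟫_ℝ = ∫ x, exp (φ x) * χ x * ψ x ∂μ := by
  rw [inner_expEmbedding]
  refine integral_congr_ae ?_
  filter_upwards [(absolutelyContinuous_expWeighted hφ.continuous.measurable).ae_le
    (coeFn_expEmbedding hφ χ)] with x hx
  rw [hx]

theorem isFormalAdjoint_expEmbedding [FiniteDimensional ℝ E] [μ.IsAddHaarMeasure]
    (hφ : ContDiff ℝ ∞ φ) (v : E) :
    IsFormalAdjoint (expEmbedding Ω μ hφ)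
      (derivEnd Ω v + mulEnd Ω (fun x ↦ fderiv ℝ φ x v) (contDiff_fderiv_apply_const hφ v))
      (-derivEnd Ω v) := fun χ ψ ↦ by
  let f : 𝓓(Ω, ℝ) := mulEnd Ω (fun x ↦ exp (φ x)) hφ.exp χ
  have hf (x : E) : fderiv ℝ f x v = exp (φ x) * (fderiv ℝ χ x v + fderiv ℝ φ x v * χ x) := by
    rw [← derivEnd_apply, derivEnd_mulEnd_apply, derivEnd_apply,
      fderiv_exp (hφ.differentiable (by simp) x), smul_apply, smul_eq_mul]
    ring
  have hmul_int (g h : 𝓓(Ω, ℝ)) : Integrable (fun x ↦ g x * h x) μ :=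
    (g.continuous.mul h.continuous).integrable_of_hasCompactSupport g.hasCompactSupport.mul_right
  have hparts : ∫ x, f x * fderiv ℝ ψ x v ∂μ = -∫ x, fderiv ℝ f x v * ψ x ∂μ := by
    apply integral_mul_fderiv_eq_neg_fderiv_mul_of_integrable
    · simpa only [derivEnd_apply] using hmul_int (derivEnd Ω v f) ψ
    · simpa only [derivEnd_apply] using hmul_int f (derivEnd Ω v ψ)
    · exact hmul_int f ψ
    · exact fun x _ ↦ f.contDiff.differentiable (by simp) x
    · exact fun x _ ↦ ψ.contDiff.differentiable (by simp) x
  calc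
    _ = ∫ x, fderiv ℝ f x v * ψ x ∂μ := by
      rw [inner_expEmbedding_expEmbedding]
      congr with x
      rw [hf, LinearMap.add_apply, add_apply, derivEnd_apply, mulEnd_apply]
    _ = -∫ x, f x * fderiv ℝ ψ x v ∂μ := by rw [hparts, neg_neg]
    _ = _ := by
      rw [LinearMap.neg_apply, map_neg, inner_neg_right, inner_expEmbedding_expEmbedding]
      simp only [derivEnd_apply, f, mulEnd_apply]

theorem norm_expEmbedding_le_of_hessian_eq [FiniteDimensional ℝ E] [μ.IsAddHaarMeasure]
    {ι : Type*} [Fintype ι] [DecidableEq ι] [Nonempty ι] {v : ι → E} {c : ℝ} (hc : 0 < c)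
    (hφ : ContDiff ℝ ∞ φ)
    (hhess : ∀ i k x, fderiv ℝ (fun y ↦ fderiv ℝ φ y (v i)) x (v k) = if i = k then c else 0)
    (a : ℝ) (ψ : 𝓓(Ω, ℝ)) :
    ‖expEmbedding Ω μ hφ ψ‖ ≤ 1 / √(2 * c ^ 2 * Fintype.card ι) *
      ‖expEmbedding Ω μ hφ ((∑ i, (-derivEnd Ω (v i)) ^ 2 + algebraMap ℝ _ a) ψ)‖ := by
  refine norm_le_mul_norm_sum_sq_add_algebraMap hc (fun i ↦ isFormalAdjoint_expEmbedding hφ (v i))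
    (fun i k ↦ ?_) a ψ
  rw [lie_derivEnd_add_mulEnd_neg_derivEnd, ← mulEnd_const]
  congr with x
  exact hhess i k x

theorem stmt10_general [FiniteDimensional ℝ E] [μ.IsAddHaarMeasure]
    {ι : Type*} [Fintype ι] [DecidableEq ι] [Nonempty ι] {v : ι → E} {c : ℝ} (hc : 0 < c)
    (hφ : ContDiff ℝ ∞ φ)
    (hhess : ∀ i k x, fderiv ℝ (fun y ↦ fderiv ℝ φ y (v i)) x (v k) = if i = k then c else 0)
    (a : ℝ) :
    ∃ Q : Lp ℝ 2 (expWeighted μ φ) →L[ℝ] Lp ℝ 2 (expWeighted μ φ),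
      (∀ f : Lp ℝ 2 (expWeighted μ φ), ∀ ψ : E → ℝ, ContDiff ℝ ∞ ψ → HasCompactSupport ψ →
        ∫ x, Q f x * (∑ i, fderiv ℝ (fun y ↦ fderiv ℝ ψ y (v i)) x (v i) + a * ψ x) ∂μ =
          ∫ x, f x * ψ x ∂μ) ∧
      ‖Q‖ ≤ 1 / √(2 * c ^ 2 * Fintype.card ι) := by
  obtain ⟨Q, hQ, hQ_norm⟩ := exists_clm_inner_apply_eq_of_norm_le (expEmbedding ⊤ μ hφ)
    (expEmbedding ⊤ μ hφ ∘ₗ (∑ i, (-derivEnd ⊤ (v i)) ^ 2 + algebraMap ℝ _ a))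
    (by positivity) (norm_expEmbedding_le_of_hessian_eq hc hφ hhess a)
  refine ⟨Q, fun f ψ hψ hψ_supp ↦ ?_, hQ_norm⟩
  have h := hQ f ⟨ψ, hψ, hψ_supp, by simp⟩
  simp only [LinearMap.comp_apply, inner_expEmbedding,
    sum_sq_neg_derivEnd_add_algebraMap_apply] at h
  exact h

end ExpEmbedding

theorem fderiv_fderiv_norm_sq_apply {F : Type*} [NormedAddCommGroup F] [InnerProductSpace ℝ F]
    (x v w : F) : fderiv ℝ (fun y ↦ fderiv ℝ (fun z : F ↦ ‖z‖ ^ 2) y v) x w = 2 * ⟪v, w⟫_ℝ := by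
  have h : (fun y ↦ fderiv ℝ (fun z : F ↦ ‖z‖ ^ 2) y v) = ⇑((2 : ℝ) • innerSL ℝ v) := by
    ext y
    simp [fderiv_norm_sq_apply, real_inner_comm, two_mul]
  rw [h, ContinuousLinearMap.fderiv]
  simp

theorem fderiv_fderiv_norm_sq_apply_of_orthonormal {F ι : Type*} [NormedAddCommGroup F]
    [InnerProductSpace ℝ F] [DecidableEq ι] {v : ι → F} (hv : Orthonormal ℝ v) (i k : ι) (x : F) :
    fderiv ℝ (fun y ↦ fderiv ℝ (fun z : F ↦ ‖z‖ ^ 2) y (v i)) x (v k) =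
      if i = k then 2 else 0 := by
  rw [fderiv_fderiv_norm_sq_apply, orthonormal_iff_ite.mp hv, mul_ite, mul_one, mul_zero]

theorem stmt10 (n : ℕ) (hn : 0 < n) (a : ℝ) :
    ∃ Q : Lp ℝ 2 (gaussMeasure n) →L[ℝ] Lp ℝ 2 (gaussMeasure n),
      (∀ f : Lp ℝ 2 (gaussMeasure n),
        ∀ ψ : EuclideanSpace ℝ (Fin n) → ℝ, ContDiff ℝ (⊤ : ℕ∞) ψ → HasCompactSupport ψ →
          ∫ x, (Q f : EuclideanSpace ℝ (Fin n) → ℝ) x * (lap ψ x + a * ψ x) ∂volume =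
            ∫ x, (f : EuclideanSpace ℝ (Fin n) → ℝ) x * ψ x ∂volume) ∧
      ‖Q‖ ≤ 1 / Real.sqrt (8 * n) := by
  have : Nonempty (Fin n) := Fin.pos_iff_nonempty.mp hn
  have h := stmt10_general (μ := volume) two_pos (contDiff_norm_sq ℝ)
    (fderiv_fderiv_norm_sq_apply_of_orthonormal (EuclideanSpace.orthonormal_single (ι := Fin n))) a
  rwa [Fintype.card_fin, show (2 * 2 ^ 2 : ℝ) = 8 by norm_num] at h
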